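/- arXiv:1401.4532 — 6 statements merged into one kernel-verified Lean document; each statement's English description precedes it below -/
import Mathlib

section
/- The mutual information of the first equivalent channel equals the capacity of the ℤ/2ℤ partition channel: for every σ > 0 and every integer r ≥ 2 with M = 2^{r−2}, setting f_Z(z|b) = (1/M)·f_{σ,2}(z − b), one has Σ_{b∈{0,1}} (1/2)·∫₀^{2^{r−1}} f_Z(z|b) · log( f_Z(z|b) / ( (1/2)(f_Z(z|0) + f_Z(z|1)) ) ) dz = h(1,σ) − h(2,σ) + log 2; in particular this quantity does not depend on r. -/
open MeasureTheory Real Filter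

/-- The Gaussian density with zero mean and standard deviation `σ`. -/
noncomputable def gaussDen (σ x : ℝ) : ℝ :=
  (Real.sqrt (2 * Real.pi * σ ^ 2))⁻¹ * Real.exp (-x ^ 2 / (2 * σ ^ 2))

/-- The `αℤ`-aliased Gaussian density `f_{σ,α}(x) = Σ_{k∈ℤ} g_σ(x − kα)`. -/
noncomputable def aliasedDen (σ α x : ℝ) : ℝ := ∑' k : ℤ, gaussDen σ (x - (k : ℝ) * α)

/-- The differential entropy `h(α,σ)` of the `αℤ`-aliased Gaussian noise
on the fundamental region `[0, α)`. -/
noncomputable def aliasedEnt (α σ : ℝ) : ℝ :=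
  -∫ x in Set.Ico (0 : ℝ) α, aliasedDen σ α x * Real.log (aliasedDen σ α x)

/-- Conditional density `f_Z(z|b) = (1/M)·f_{σ,2}(z − b)`, `M = 2^{r−2}`, of the first
equivalent channel of the binary partition chain `ℤ/2ℤ/⋯/2^{r−1}ℤ` under uniform inputs. -/
noncomputable def eqChDen (σ : ℝ) (r : ℕ) (z b : ℝ) : ℝ :=
  ((1 : ℝ) / 2 ^ (r - 2)) * aliasedDen σ 2 (z - b)

lemma ag_pos (σ : ℝ) (hσ : 0 < σ) (x : ℝ) : 0 < gaussDen σ x := by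
  unfold gaussDen
  positivity

lemma ag_cont (σ : ℝ) : Continuous (gaussDen σ) := by
  unfold gaussDen
  fun_prop

lemma ag_pdf (σ : ℝ) : gaussDen σ = ProbabilityTheory.gaussianPDFReal 0 ⟨σ ^ 2, sq_nonneg σ⟩ := by
  ext x
  simp only [gaussDen, ProbabilityTheory.gaussianPDFReal, sub_zero]
  rfl

lemma ag_bound_summable (c : ℝ) (hc : 0 < c) (C : ℝ) :
    Summable (fun k : ℤ => C * Real.exp (-c * (k : ℝ) ^ 2)) := by
  apply Summable.mul_left
  have h : Summable (fun n : ℕ => Real.exp (-c * ((n : ℝ) ^ 2))) := by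
    apply Real.summable_exp_nat_mul_of_ge (by linarith)
    intro i
    have : i ≤ i ^ 2 := Nat.le_self_pow (by norm_num) i
    exact_mod_cast this
  apply summable_int_iff_summable_nat_and_neg.mpr
  constructor
  · simpa using h
  · simpa using h

lemma ag_bound (σ : ℝ) (hσ : 0 < σ) (α R x : ℝ) (hx : |x| ≤ R) (k : ℤ) :
    ‖gaussDen σ (x - k * α)‖ ≤ ((Real.sqrt (2 * Real.pi * σ ^ 2))⁻¹ * Real.exp (R ^ 2 / (2 * σ ^ 2)))
      * Real.exp (-(α ^ 2 / (4 * σ ^ 2)) * (k : ℝ) ^ 2) := by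
  rw [Real.norm_of_nonneg (ag_pos σ hσ _).le]
  unfold gaussDen
  rw [mul_assoc (_)⁻¹ (Real.exp _), ← Real.exp_add]
  gcongr
  have h2 : x ^ 2 ≤ R ^ 2 := by
    rw [← sq_abs x]
    gcongr
  have : R ^ 2 / (2 * σ ^ 2) + -(α ^ 2 / (4 * σ ^ 2)) * (k : ℝ) ^ 2
      = (R ^ 2 - α ^ 2 * k ^ 2 / 2) / (2 * σ ^ 2) := by
    field_simp
    ring
  rw [this]
  gcongr
  nlinarith [sq_nonneg (2 * x - k * α)]

lemma ag_summable (σ : ℝ) (hσ : 0 < σ) (α : ℝ) (hα : 0 < α) (x : ℝ) :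
    Summable (fun k : ℤ => gaussDen σ (x - k * α)) :=
  Summable.of_norm_bounded (ag_bound_summable _ (by positivity) _)
    (ag_bound σ hσ α |x| x le_rfl)

lemma ad_cont (σ : ℝ) (hσ : 0 < σ) (α : ℝ) (hα : 0 < α) : Continuous (aliasedDen σ α) := by
  rw [continuous_iff_continuousAt]
  intro x
  have h : ContinuousOn (aliasedDen σ α) (Metric.ball 0 (|x| + 1)) := by
    unfold aliasedDen
    apply continuousOn_tsum (fun k => ?_)
      (ag_bound_summable (α ^ 2 / (4 * σ ^ 2)) (by positivity) _)
      (fun k y hy => ag_bound σ hσ α (|x| + 1) y ?_ k)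
    · exact ((ag_cont σ).comp (by fun_prop)).continuousOn
    · simp at hy
      exact hy.le
  apply h.continuousAt
  apply Metric.isOpen_ball.mem_nhds
  simp

lemma ad_pos (σ : ℝ) (hσ : 0 < σ) (α : ℝ) (hα : 0 < α) (x : ℝ) : 0 < aliasedDen σ α x :=
  (ag_summable σ hσ α hα x).tsum_pos (fun _ => (ag_pos σ hσ _).le) 0 (ag_pos σ hσ _)

lemma ad_per (σ α : ℝ) : Function.Periodic (aliasedDen σ α) α := by
  intro x
  unfold aliasedDen
  rw [← (Equiv.addRight (1 : ℤ)).tsum_eq]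
  congr 1
  ext k
  congr 1
  simp
  ring

lemma ad_split (σ : ℝ) (hσ : 0 < σ) (x : ℝ) :
    aliasedDen σ 2 x + aliasedDen σ 2 (x - 1) = aliasedDen σ 1 x := by
  have he := (ag_summable σ hσ 2 two_pos x).hasSum
  have ho := (ag_summable σ hσ 2 two_pos (x - 1)).hasSum
  have ie : Function.Injective (fun k : ℤ => 2 * k) := fun a b h => by simpa using h
  have io : Function.Injective (fun k : ℤ => 2 * k + 1) := fun a b h => by simpa using h
  have he' : HasSum ((fun k : ℤ => gaussDen σ (x - k * 1)) ∘ (fun k : ℤ => 2 * k))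
      (aliasedDen σ 2 x) := by
    have q : (fun k : ℤ => gaussDen σ (x - k * 2)) = ((fun k : ℤ => gaussDen σ (x - k * 1)) ∘ (fun k : ℤ => 2 * k)) := by
      ext k
      simp [mul_comm]
    rw [← q]
    exact he
  have ho' : HasSum ((fun k : ℤ => gaussDen σ (x - k * 1)) ∘ (fun k : ℤ => 2 * k + 1))
      (aliasedDen σ 2 (x - 1)) := by
    have q : (fun k : ℤ => gaussDen σ (x - 1 - k * 2)) = ((fun k : ℤ => gaussDen σ (x - k * 1)) ∘ (fun k : ℤ => 2 * k + 1)) := by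
      ext k
      simp only [Function.comp]
      congr 1
      push_cast
      ring
    rw [← q]
    exact ho
  have h := (ie.hasSum_range_iff.mpr he').add_isCompl ?_ (io.hasSum_range_iff.mpr ho')
  · exact h.tsum_eq.symm
  · have a1 : (Set.range fun k : ℤ => 2 * k) = {n | Even n} := by
      ext k
      simp
    have a2 : (Set.range fun k : ℤ => 2 * k + 1) = {n | Odd n} := by
      ext k
      simp
    rw [a1, a2]
    exact Int.isCompl_even_odd

lemma ad_int (σ : ℝ) (hσ : 0 < σ) : ∫ x in (0 : ℝ)..1, aliasedDen σ 1 x = 1 := by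
  have hi : Integrable (gaussDen σ) := by
    rw [ag_pdf]
    exact ProbabilityTheory.integrable_gaussianPDFReal _ _
  have h1 : ∫ x, gaussDen σ x = 1 := by
    rw [ag_pdf]
    apply ProbabilityTheory.integral_gaussianPDFReal_eq_one
    intro h
    have := congrArg NNReal.toReal h
    exact (pow_pos hσ 2).ne' this
  have hs := hi.hasSum_intervalIntegral_comp_add_int
  rw [h1, ← (Equiv.neg ℤ).hasSum_iff] at hs
  have hs' : HasSum (fun k : ℤ => ∫ x in Set.Ioc (0 : ℝ) 1, gaussDen σ (x - k * 1)) 1 := by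
    have q : (fun k : ℤ => ∫ x in Set.Ioc (0 : ℝ) 1, gaussDen σ (x - k * 1)) =
        ((fun n : ℤ => ∫ x in (0 : ℝ)..1, gaussDen σ (x + n)) ∘ (Equiv.neg ℤ)) := by
      ext k
      simp [intervalIntegral.integral_of_le, sub_eq_add_neg]
    rw [q]
    exact hs
  rw [intervalIntegral.integral_of_le zero_le_one]
  have h := hasSum_integral_of_summable_integral_norm
    (μ := volume.restrict (Set.Ioc (0 : ℝ) 1))
    (F := fun (k : ℤ) (x : ℝ) => gaussDen σ (x - k * 1)) ?_ ?_
  · exact h.unique hs'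
  · intro k
    have : Continuous (fun x : ℝ => gaussDen σ (x - k * 1)) := (ag_cont σ).comp (by fun_prop)
    exact this.integrableOn_Ioc
  · convert hs'.summable using 1
    ext k
    congr 1
    ext x
    exact Real.norm_of_nonneg (ag_pos σ hσ _).le

lemma per_int (f : ℝ → ℝ) (hf : Continuous f) (T : ℝ) (hp : Function.Periodic f T) (n : ℕ) :
    ∫ x in (0 : ℝ)..(n * T), f x = n * ∫ x in (0 : ℝ)..T, f x := by
  have := hp.intervalIntegral_add_zsmul_eq n 0 (fun _ _ => hf.intervalIntegrable _ _)
  simpa using this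

theorem first_equivalent_channel_mutual_information (σ : ℝ) (hσ : 0 < σ)
    (r : ℕ) (hr : 2 ≤ r) :
    ∑ b ∈ Finset.range 2, ((1 : ℝ) / 2) *
        ∫ z in Set.Ico (0 : ℝ) ((2 : ℝ) ^ (r - 1)),
          eqChDen σ r z b * Real.log (eqChDen σ r z b /
            (((1 : ℝ) / 2) * (eqChDen σ r z 0 + eqChDen σ r z 1))) =
      aliasedEnt 1 σ - aliasedEnt 2 σ + Real.log 2 := by
  obtain ⟨m, rfl⟩ := Nat.exists_eq_add_of_le hr
  have e1 : 2 + m - 1 = m + 1 := by omega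
  have e2 : 2 + m - 2 = m := by omega
  unfold aliasedEnt eqChDen
  rw [e1, e2]
  simp only [integral_Ico_eq_integral_Ioc]
  rw [← intervalIntegral.integral_of_le zero_le_one, ← intervalIntegral.integral_of_le zero_le_two]
  simp only [← intervalIntegral.integral_of_le (show (0 : ℝ) ≤ 2 ^ (m + 1) by positivity)]
  have c1 := ad_cont σ hσ 1 one_pos
  have c2 := ad_cont σ hσ 2 two_pos
  have p1 := ad_pos σ hσ 1 one_pos
  have p2 := ad_pos σ hσ 2 two_pos
  have q1 := ad_per σ 1
  have q2 := ad_per σ 2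
  have hI := ad_int σ hσ
  have hs := ad_split σ hσ
  generalize aliasedDen σ 1 = F at *
  generalize aliasedDen σ 2 = G at *
  have c2' : Continuous (fun z => G (z - 1)) := c2.comp (by fun_prop)
  have l1 : Continuous (fun z => F z * Real.log (F z)) := c1.mul (c1.log fun z => (p1 z).ne')
  have l2 : Continuous (fun z => G z * Real.log (G z)) := c2.mul (c2.log fun z => (p2 z).ne')
  have l3 : Continuous (fun z => G (z - 1) * Real.log (G (z - 1))) := l2.comp (by fun_prop)
  have x1 : Continuous (fun z => G z * Real.log (F z)) := c2.mul (c1.log fun z => (p1 z).ne')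
  have x2 : Continuous (fun z => G (z - 1) * Real.log (F z)) :=
    c2'.mul (c1.log fun z => (p1 z).ne')
  have key : ∀ (M a f : ℝ), 0 < M → 0 < a → 0 < f →
      1 / M * a * Real.log (1 / M * a / (1 / 2 * (1 / M * f))) =
      1 / M * (a * Real.log a - a * Real.log f + a * Real.log 2) := by
    intro M a f hM ha hf
    have : 1 / M * a / (1 / 2 * (1 / M * f)) = a / f * 2 := by
      field_simp
    rw [this, Real.log_mul (by positivity) (by norm_num), Real.log_div ha.ne' hf.ne']
    ring
  have hM : (0 : ℝ) < 2 ^ m := by positivity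
  simp only [Finset.sum_range_succ, Finset.sum_range_zero, Nat.cast_zero, Nat.cast_one, sub_zero,
    zero_add, ← mul_add, hs]
  simp only [key _ _ _ hM (p2 _) (p1 _)]
  have y1 : Continuous (fun z => G z * Real.log (G z) - G z * Real.log (F z) + G z * Real.log 2) :=
    (l2.sub x1).add (c2.mul continuous_const)
  have y2 : Continuous (fun z => G (z - 1) * Real.log (G (z - 1)) - G (z - 1) * Real.log (F z)
      + G (z - 1) * Real.log 2) := (l3.sub x2).add (c2'.mul continuous_const)
  have y3 : Continuous (fun z => G z * Real.log (G z) + G (z - 1) * Real.log (G (z - 1))) :=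
    l2.add l3
  have y4 : Continuous (fun z => G z * Real.log (G z) + G (z - 1) * Real.log (G (z - 1))
      - F z * Real.log (F z)) := y3.sub l1
  have y5 : Continuous (fun z => F z * Real.log 2) := c1.mul continuous_const
  rw [intervalIntegral.integral_const_mul, intervalIntegral.integral_const_mul, ← mul_add,
    ← intervalIntegral.integral_add
      (y1.intervalIntegrable _ _)
      (y2.intervalIntegrable _ _)]
  have e : ∀ z, G z * Real.log (G z) - G z * Real.log (F z) + G z * Real.log 2 +
      (G (z - 1) * Real.log (G (z - 1)) - G (z - 1) * Real.log (F z) + G (z - 1) * Real.log 2) =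
      ((G z * Real.log (G z) + G (z - 1) * Real.log (G (z - 1))) - F z * Real.log (F z))
        + F z * Real.log 2 := by
    intro z
    rw [← hs z]
    ring
  simp only [e]
  rw [intervalIntegral.integral_add (y4.intervalIntegrable _ _)
      (y5.intervalIntegrable _ _),
    intervalIntegral.integral_sub (y3.intervalIntegrable _ _)
      (l1.intervalIntegrable _ _),
    intervalIntegral.integral_add (l2.intervalIntegrable _ _)
      (l3.intervalIntegrable _ _), intervalIntegral.integral_mul_const]
  have r2 : Function.Periodic (fun z => G z * Real.log (G z)) 2 := fun z => by simp only [q2 z]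
  have r3 : Function.Periodic (fun z => G (z - 1) * Real.log (G (z - 1))) 2 := fun z => by
    have : z + 2 - 1 = (z - 1) + 2 := by ring
    simp only [this, q2 (z - 1)]
  have r1 : Function.Periodic (fun z => F z * Real.log (F z)) 1 := fun z => by simp only [q1 z]
  have i2 := per_int _ l2 2 r2 (2 ^ m)
  have i3 := per_int _ l3 2 r3 (2 ^ m)
  have i1 := per_int _ l1 1 r1 (2 ^ (m + 1))
  have i0 := per_int _ c1 1 q1 (2 ^ (m + 1))
  have s3 : ∫ z in (0 : ℝ)..2, G (z - 1) * Real.log (G (z - 1))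
      = ∫ z in (0 : ℝ)..2, G z * Real.log (G z) := by
    rw [intervalIntegral.integral_comp_sub_right (fun z => G z * Real.log (G z)) 1]
    have := r2.intervalIntegral_add_eq (0 - 1) 0
    convert this using 2 <;> norm_num
  push_cast at i0 i1 i2 i3
  rw [mul_one] at i0 i1
  rw [← pow_succ] at i2 i3
  rw [i0, i1, i2, i3, s3, hI, pow_succ]
  field_simp
  ring
end

section
/- Equality of mutual information of the first (minus) polarized bit-channels: for every σ > 0 and integer r ≥ 2 with M = 2^{r−2}, let q(z|b) = f_{σ,2}(z−b) on D = [0,2) and q'(z|b) = (1/M)·f_{σ,2}(z−b) on D' = [0,2^{r−1}), and define W⁻(z₁,z₂|u₁) = (1/2)·Σ_{u₂∈{0,1}} q(z₁|u₁⊕u₂)·q(z₂|u₂) and W'⁻ analogously from q'. Then Σ_{u₁∈{0,1}} (1/2)∬_{D'×D'} W'⁻(z₁,z₂|u₁)·log( W'⁻(z₁,z₂|u₁) / ( (1/2)(W'⁻(z₁,z₂|0)+W'⁻(z₁,z₂|1)) ) ) dz₁dz₂ = Σ_{u₁∈{0,1}} (1/2)∬_{D×D} W⁻(z₁,z₂|u₁)·log(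 W⁻(z₁,z₂|u₁) / ( (1/2)(W⁻(z₁,z₂|0)+W⁻(z₁,z₂|1)) ) ) dz₁dz₂. -/
open MeasureTheory Real Filter

/-- The `ℤ/2ℤ` partition channel density `q(z|b) = f_{σ,2}(z − b)` on `[0, 2)`. -/
noncomputable def qDen (σ z : ℝ) (b : ZMod 2) : ℝ := aliasedDen σ 2 (z - (b.val : ℝ))

/-- The first equivalent channel density `q'(z|b) = (1/M)·f_{σ,2}(z − b)` on `[0, 2^{r−1})`,
where `M = 2^{r−2}`. -/
noncomputable def qDen' (σ : ℝ) (r : ℕ) (z : ℝ) (b : ZMod 2) : ℝ :=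
  ((1 : ℝ) / 2 ^ (r - 2)) * aliasedDen σ 2 (z - (b.val : ℝ))

/-- The first (minus/worse) bit-channel obtained from one step of Arıkan's polarization
transform applied to two independent copies of a binary-input channel `p`. -/
noncomputable def Wminus (p : ℝ → ZMod 2 → ℝ) (z₁ z₂ : ℝ) (u₁ : ZMod 2) : ℝ :=
  ((1 : ℝ) / 2) * ∑ u₂ : ZMod 2, p z₁ (u₁ + u₂) * p z₂ u₂

/-- The second (plus/better) bit-channel obtained from one step of Arıkan's polarization
transform, whose output includes the bit `u₂`. -/
noncomputable def Wplus (p : ℝ → ZMod 2 → ℝ) (z₁ z₂ : ℝ) (u₂ u₁ : ZMod 2) : ℝ :=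
  ((1 : ℝ) / 2) * p z₁ (u₁ + u₂) * p z₂ u₂

lemma aliasedDen_periodic (σ x : ℝ) : aliasedDen σ 2 (x + 2) = aliasedDen σ 2 x := by
  unfold aliasedDen
  rw [← (Equiv.addRight (1 : ℤ)).tsum_eq]
  refine tsum_congr fun k => ?_
  congr 1
  simp only [Equiv.coe_addRight]
  push_cast
  ring

lemma qDen_periodic (σ z : ℝ) (b : ZMod 2) : qDen σ (z + 2) b = qDen σ z b := by
  unfold qDen
  rw [← aliasedDen_periodic σ (z - _)]
  congr 1
  ring

lemma Wminus_qDen' (σ : ℝ) (r : ℕ) (z₁ z₂ : ℝ) (u : ZMod 2) :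
    Wminus (qDen' σ r) z₁ z₂ u =
      (((1 : ℝ) / 2 ^ (r - 2)) * ((1 : ℝ) / 2 ^ (r - 2))) * Wminus (qDen σ) z₁ z₂ u := by
  unfold Wminus qDen' qDen
  rw [Finset.mul_sum, Finset.mul_sum, Finset.mul_sum]
  refine Finset.sum_congr rfl fun x _ => ?_
  ring

lemma integral_Ico_periodic (f : ℝ → ℝ) (hf : Function.Periodic f 2) (n : ℕ) (hn : 1 ≤ n) :
    ∫ x in Set.Ico (0 : ℝ) (n * 2), f x = n * ∫ x in Set.Ico (0 : ℝ) 2, f x := by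
  have hn' : (1 : ℝ) ≤ n := by exact_mod_cast hn
  rw [integral_Ico_eq_integral_Ioc, integral_Ico_eq_integral_Ioc,
    ← intervalIntegral.integral_of_le (by positivity),
    ← intervalIntegral.integral_of_le (by positivity)]
  by_cases h : IntervalIntegrable f volume 0 2
  · have := hf.intervalIntegral_add_zsmul_eq n 0
      (fun a b => hf.intervalIntegrable₀ (by norm_num) h a b)
    simpa using this
  · rw [intervalIntegral.integral_undef h, intervalIntegral.integral_undef, mul_zero]
    intro h'
    apply h
    refine h'.mono_set ?_
    rw [Set.uIcc_of_le (by norm_num), Set.uIcc_of_le (by positivity)]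
    exact Set.Icc_subset_Icc le_rfl (by linarith)

/-- equality of the mutual information of the first (minus) polarized
bit-channels constructed from the first equivalent channel and from the `ℤ/2ℤ`
partition channel. -/
theorem minus_bit_channel_mutual_information_eq (σ : ℝ) (hσ : 0 < σ) (r : ℕ) (hr : 2 ≤ r) :
    ∑ u₁ : ZMod 2, ((1 : ℝ) / 2) *
        ∫ z₁ in Set.Ico (0 : ℝ) ((2 : ℝ) ^ (r - 1)),
          ∫ z₂ in Set.Ico (0 : ℝ) ((2 : ℝ) ^ (r - 1)),
            Wminus (qDen' σ r) z₁ z₂ u₁ *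
              Real.log (Wminus (qDen' σ r) z₁ z₂ u₁ /
                (((1 : ℝ) / 2) * (Wminus (qDen' σ r) z₁ z₂ 0 + Wminus (qDen' σ r) z₁ z₂ 1))) =
      ∑ u₁ : ZMod 2, ((1 : ℝ) / 2) *
        ∫ z₁ in Set.Ico (0 : ℝ) (2 : ℝ),
          ∫ z₂ in Set.Ico (0 : ℝ) (2 : ℝ),
            Wminus (qDen σ) z₁ z₂ u₁ *
              Real.log (Wminus (qDen σ) z₁ z₂ u₁ /
                (((1 : ℝ) / 2) * (Wminus (qDen σ) z₁ z₂ 0 + Wminus (qDen σ) z₁ z₂ 1))) := by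
  have hM : (2 : ℝ) ^ (r - 1) = ((2 ^ (r - 2) : ℕ) : ℝ) * 2 := by
    push_cast
    rw [← pow_succ]
    congr 1
    omega
  have hM1 : 1 ≤ 2 ^ (r - 2) := Nat.one_le_two_pow
  have hc : ((1 : ℝ) / 2 ^ (r - 2)) * ((1 : ℝ) / 2 ^ (r - 2)) ≠ 0 := by positivity
  refine Finset.sum_congr rfl fun u _ => ?_
  congr 1
  have h1 : ∀ z₂ v, Function.Periodic (fun z₁ => Wminus (qDen σ) z₁ z₂ v) 2 := by
    intro z₂ v z₁
    simp only [Wminus, qDen_periodic]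
  have h2 : ∀ z₁ v, Function.Periodic (fun z₂ => Wminus (qDen σ) z₁ z₂ v) 2 := by
    intro z₁ v z₂
    simp only [Wminus, qDen_periodic]
  simp only [Wminus_qDen']
  simp only [← mul_add, mul_left_comm ((1 : ℝ) / 2) (_ * _), mul_div_mul_left _ _ hc]
  simp only [mul_assoc (_ * _) (Wminus _ _ _ _), integral_const_mul]
  rw [hM, integral_Ico_periodic _ _ _ hM1]
  · have : ∀ z₁, _ := fun z₁ => integral_Ico_periodic (fun z₂ => Wminus (qDen σ) z₁ z₂ u *
              Real.log (Wminus (qDen σ) z₁ z₂ u /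
                (((1 : ℝ) / 2) * (Wminus (qDen σ) z₁ z₂ 0 + Wminus (qDen σ) z₁ z₂ 1))))
        (by
          intro z
          have := fun v => h2 z₁ v z
          simp only at this
          simp only [this]) _ hM1
    simp only [this, integral_const_mul]
    push_cast
    field_simp
    simp only [mul_comm (2 : ℝ)]
  · intro z
    have := fun z₂ v => h1 z₂ v z
    simp only at this
    simp only [this]
end

section
/- Output symmetry of the first equivalent channel: for every σ > 0 and integer r ≥ 2 with M = 2^{r−2}, let f_Z(z|b) = (1/M)·f_{σ,2}(z−b). The map T : [0, 2^{r−1}) → [0, 2^{r−1}) given by T(z) = (1 − z) mod 2^{r−1} is a Lebesgue-measure-preserving involution, and f_Z(z|1) = f_Z(T(z)|0) for every z ∈ [0, 2^{r−1}); hence the equivalent channel is a binary-input memoryless symmetric channel. -/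
open MeasureTheory Real Filter

/-- output symmetry of the first equivalent channel: the map
`T(z) = (1 − z) mod 2^{r−1}` is a measure-preserving involution of `[0, 2^{r−1})`
with `f_Z(z|1) = f_Z(T(z)|0)`; hence the channel is a BMS channel. -/
theorem first_equivalent_channel_symmetric (σ : ℝ) (hσ : 0 < σ) (r : ℕ) (hr : 2 ≤ r) :
    ∀ L : ℝ, L = (2 : ℝ) ^ (r - 1) →
    ∀ T : ℝ → ℝ, (∀ z : ℝ, T z = (1 - z) - L * (⌊(1 - z) / L⌋ : ℝ)) →
      (∀ z ∈ Set.Ico (0 : ℝ) L, T z ∈ Set.Ico (0 : ℝ) L) ∧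
      MeasurePreserving T (volume.restrict (Set.Ico (0 : ℝ) L))
        (volume.restrict (Set.Ico (0 : ℝ) L)) ∧
      (∀ z ∈ Set.Ico (0 : ℝ) L, T (T z) = z) ∧
      (∀ z ∈ Set.Ico (0 : ℝ) L, eqChDen σ r z 1 = eqChDen σ r (T z) 0) := by
  intro L hL T hT
  obtain ⟨m, rfl⟩ : ∃ m, r = m + 2 := ⟨r - 2, by omega⟩
  have hL2 : L = 2 * 2 ^ m := by rw [hL]; simp [pow_succ, mul_comm]
  have hm : (1 : ℝ) ≤ 2 ^ m := one_le_pow₀ (by norm_num)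
  have hL2' : 2 ≤ L := by linarith
  have hL0 : 0 < L := by linarith
  have h1 : ∀ z, 0 ≤ z → z ≤ 1 → T z = 1 - z := by
    intro z h0 h1
    have : ⌊(1 - z) / L⌋ = 0 := by
      rw [Int.floor_eq_iff]
      constructor
      · simp only [Int.cast_zero]; exact div_nonneg (by linarith) hL0.le
      · rw [div_lt_iff₀ hL0]; simp only [Int.cast_zero]; linarith
    rw [hT, this]; simp
  have h2 : ∀ z, 1 < z → z < L → T z = 1 + L - z := by
    intro z h0 h1
    have : ⌊(1 - z) / L⌋ = -1 := by
      rw [Int.floor_eq_iff]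
      constructor
      · rw [le_div_iff₀ hL0]; push_cast; linarith
      · rw [div_lt_iff₀ hL0]; push_cast; linarith
    rw [hT, this]; push_cast; ring
  have hTm : Measurable T := by
    have : T = fun z => (1 - z) - L * (⌊(1 - z) / L⌋ : ℝ) := funext hT
    rw [this]
    fun_prop
  refine ⟨?_, ⟨hTm, ?_⟩, ?_, ?_⟩
  · rintro z ⟨h0, hz⟩
    rcases le_or_gt z 1 with h | h
    · rw [h1 z h0 h]; constructor <;> linarith
    · rw [h2 z h hz]; constructor <;> linarith
  · ext s hs
    rw [Measure.map_apply hTm hs, Measure.restrict_apply (hTm hs), Measure.restrict_apply hs]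
    have e1 : T ⁻¹' s ∩ Set.Ico 0 L = (fun z => 1 - z) ⁻¹' (s ∩ Set.Icc 0 1) ∪
        (fun z => (1 + L) - z) ⁻¹' (s ∩ Set.Ioo 1 L) := by
      ext z
      simp only [Set.mem_inter_iff, Set.mem_preimage, Set.mem_union, Set.mem_Ico, Set.mem_Icc,
        Set.mem_Ioo]
      constructor
      · rintro ⟨hz, h0, hzL⟩
        rcases le_or_gt z 1 with h | h
        · rw [h1 z h0 h] at hz; left; refine ⟨hz, ?_, ?_⟩ <;> linarith
        · rw [h2 z h hzL] at hz; right; refine ⟨hz, ?_, ?_⟩ <;> linarith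
      · rintro (⟨hz, ha, hb⟩ | ⟨hz, ha, hb⟩)
        · rw [h1 z (by linarith) (by linarith)]; refine ⟨hz, ?_, ?_⟩ <;> linarith
        · rw [h2 z (by linarith) (by linarith)]; refine ⟨hz, ?_, ?_⟩ <;> linarith
    have e2 : s ∩ Set.Ico 0 L = (s ∩ Set.Icc 0 1) ∪ (s ∩ Set.Ioo 1 L) := by
      ext z
      simp only [Set.mem_inter_iff, Set.mem_union, Set.mem_Ico, Set.mem_Icc, Set.mem_Ioo]
      constructor
      · rintro ⟨hz, h0, hzL⟩
        rcases le_or_gt z 1 with h | h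
        · exact Or.inl ⟨hz, h0, h⟩
        · exact Or.inr ⟨hz, h, hzL⟩
      · rintro (⟨hz, ha, hb⟩ | ⟨hz, ha, hb⟩) <;> refine ⟨hz, ?_, ?_⟩ <;> linarith
    have m1 : MeasurableSet (s ∩ Set.Icc (0 : ℝ) 1) := hs.inter measurableSet_Icc
    have m2 : MeasurableSet (s ∩ Set.Ioo (1 : ℝ) L) := hs.inter measurableSet_Ioo
    have p1 := volume.measurePreserving_sub_left (1 : ℝ)
    have p2 := volume.measurePreserving_sub_left (1 + L : ℝ)
    rw [e1, e2, measure_union _ (p2.measurable m2), measure_union _ m2,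
      p1.measure_preimage m1.nullMeasurableSet, p2.measure_preimage m2.nullMeasurableSet]
    · rw [Set.disjoint_left]
      rintro z ⟨-, ha, hb⟩ ⟨-, hc, hd⟩
      linarith
    · rw [Set.disjoint_left]
      rintro z ⟨-, ha, hb⟩ ⟨-, hc, hd⟩
      simp only at ha hb hc hd
      linarith
  · rintro z ⟨h0, hz⟩
    rcases le_or_gt z 1 with h | h
    · rw [h1 z h0 h, h1 _ (by linarith) (by linarith)]; ring
    · rw [h2 z h hz, h2 _ (by linarith) (by linarith)]; ring
  · intro z _
    unfold eqChDen aliasedDen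
    congr 1
    rw [hT z]
    generalize ⌊(1 - z) / L⌋ = n
    rw [← (Equiv.subLeft (-(2 ^ m * n) : ℤ)).tsum_eq]
    refine tsum_congr fun k => ?_
    have : z - 1 - ((Equiv.subLeft (-(2 ^ m * n) : ℤ) k : ℤ) : ℝ) * 2
        = -(1 - z - L * n - 0 - k * 2) := by
      rw [hL2, Equiv.subLeft_apply]; push_cast; ring
    rw [this]
    unfold gaussDen
    rw [neg_sq]
end

section
/- Monotonicity of the aliased-noise differential entropy in the noise level: for every α > 0 and all σ₁, σ₂ with 0 < σ₁ ≤ σ₂, one has h(α,σ₁) ≤ h(α,σ₂); in particular the quantity ε₁ = h(α,σ_e) − h(α,σ_b) appearing in the secrecy-rate computation is nonnegative whenever σ_b ≤ σ_e. -/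
open MeasureTheory Real Filter

lemma gaussDen_nonneg (s x : ℝ) : 0 ≤ gaussDen s x := by unfold gaussDen; positivity

lemma gaussDen_cont (s : ℝ) : Continuous (gaussDen s) := by
  unfold gaussDen; fun_prop

lemma gaussDen_le (s x : ℝ) : gaussDen s x ≤ (Real.sqrt (2 * Real.pi * s ^ 2))⁻¹ := by
  unfold gaussDen
  refine mul_le_of_le_one_right (by positivity) (Real.exp_le_one_iff.2 ?_)
  rw [neg_div]
  have : 0 ≤ x ^ 2 / (2 * s ^ 2) := by positivity
  linarith

lemma gaussDen_conv (s t u x : ℝ) (hs : 0 < s) (ht : 0 < t) (hu : 0 < u)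
    (h : u ^ 2 = s ^ 2 + t ^ 2) :
    ∫ y, gaussDen s (x - y) ∂(ProbabilityTheory.gaussianReal 0 (NNReal.mk (t ^ 2) (sq_nonneg t)))
      = gaussDen u x := by
  have hv : NNReal.mk (t ^ 2) (sq_nonneg t) ≠ 0 := by
    intro hh
    have := congrArg NNReal.toReal hh
    simp at this
    exact ht.ne' this
  set w : NNReal := NNReal.mk ((s * t / u) ^ 2) (sq_nonneg _) with hw
  have hw0 : w ≠ 0 := by
    intro hh
    have h2 : (w : ℝ) = 0 := by rw [hh]; rfl
    have h3 : (s * t / u) ^ 2 = 0 := h2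
    have : 0 < (s * t / u) ^ 2 := by positivity
    linarith
  rw [ProbabilityTheory.integral_gaussianReal_eq_integral_smul hv]
  have key : ∀ y, ProbabilityTheory.gaussianPDFReal 0 (NNReal.mk (t ^ 2) (sq_nonneg t)) y • gaussDen s (x - y)
      = gaussDen u x * ProbabilityTheory.gaussianPDFReal (x * t ^ 2 / u ^ 2) w y := by
    intro y
    simp only [ProbabilityTheory.gaussianPDFReal, gaussDen, smul_eq_mul, hw, NNReal.coe_mk]
    have e1 : ∀ r : ℝ, 0 < r → √(2 * π * r ^ 2) = √(2 * π) * r := by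
      intro r hr
      rw [Real.sqrt_mul (by positivity), Real.sqrt_sq hr.le]
    rw [e1 s hs, e1 t ht, e1 u hu, e1 (s * t / u) (by positivity)]
    have e2 : -(y - 0) ^ 2 / (2 * t ^ 2) + -(x - y) ^ 2 / (2 * s ^ 2)
        = -x ^ 2 / (2 * u ^ 2) + -(y - x * t ^ 2 / u ^ 2) ^ 2 / (2 * (s * t / u) ^ 2) := by
      have hs2 : s ^ 2 = u ^ 2 - t ^ 2 := by linarith
      have : u ^ 2 - t ^ 2 ≠ 0 := by rw [← hs2]; positivity
      rw [div_pow, mul_pow, hs2]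
      field_simp
      ring
    calc _ = (√(2 * π) * t)⁻¹ * (√(2 * π) * s)⁻¹ *
          (rexp (-(y - 0) ^ 2 / (2 * t ^ 2)) * rexp (-(x - y) ^ 2 / (2 * s ^ 2))) := by ring
      _ = (√(2 * π) * u)⁻¹ * (√(2 * π) * (s * t / u))⁻¹ *
          (rexp (-x ^ 2 / (2 * u ^ 2)) *
            rexp (-(y - x * t ^ 2 / u ^ 2) ^ 2 / (2 * (s * t / u) ^ 2))) := by
          rw [← Real.exp_add, e2, ← Real.exp_add]
          congr 1
          field_simp
      _ = _ := by ring
  simp_rw [key]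
  rw [integral_const_mul, ProbabilityTheory.integral_gaussianPDFReal_eq_one _ hw0, mul_one]

lemma gaussDen_bound (s α R : ℝ) (hs : 0 < s) (hα : 0 < α) :
    ∃ u : ℤ → ℝ, Summable u ∧ ∀ k : ℤ, ∀ x ∈ Set.Ioo (-R) R,
      ‖gaussDen s (x - (k : ℝ) * α)‖ ≤ u k := by
  have hT : 0 < α ^ 2 / (4 * π * s ^ 2) := by positivity
  refine ⟨_, (summable_pow_mul_jacobiTheta₂_term_bound 0 hT 0).mul_left
    ((Real.sqrt (2 * Real.pi * s ^ 2))⁻¹ * rexp (R ^ 2 / (2 * s ^ 2))), ?_⟩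
  intro k x hx
  rw [Real.norm_of_nonneg (gaussDen_nonneg _ _)]
  unfold gaussDen
  simp only [pow_zero, one_mul, mul_assoc]
  gcongr
  rw [← Real.exp_add]
  gcongr
  have hx2 : x ^ 2 ≤ R ^ 2 := by
    have := hx.1; have := hx.2
    nlinarith
  have : R ^ 2 / (2 * s ^ 2) +
      -(π * (α ^ 2 / (4 * (π * s ^ 2)) * (k : ℝ) ^ 2 - 2 * (0 * |(k : ℝ)|)))
      = (R ^ 2 - α ^ 2 * (k : ℝ) ^ 2 / 2) / (2 * s ^ 2) := by
    field_simp
    ring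
  simp only [neg_mul, Int.cast_abs]
  rw [this]
  gcongr
  nlinarith [sq_nonneg (2 * x - k * α)]

lemma gaussDen_summable (s α x : ℝ) (hs : 0 < s) (hα : 0 < α) :
    Summable fun k : ℤ => gaussDen s (x - (k : ℝ) * α) := by
  obtain ⟨u, hu, h⟩ := gaussDen_bound s α (|x| + 1) hs hα
  refine hu.of_norm_bounded fun k => h k x ⟨?_, ?_⟩
  · linarith [neg_abs_le x]
  · linarith [le_abs_self x]

lemma aliasedDen_cont (s α : ℝ) (hs : 0 < s) (hα : 0 < α) : Continuous (aliasedDen s α) := by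
  rw [continuous_iff_continuousAt]
  intro x
  obtain ⟨u, hu, h⟩ := gaussDen_bound s α (|x| + 1) hs hα
  have := continuousOn_tsum (f := fun (k : ℤ) x => gaussDen s (x - (k : ℝ) * α))
    (s := Set.Ioo (-(|x| + 1)) (|x| + 1))
    (fun k => ((gaussDen_cont s).comp (by fun_prop)).continuousOn) hu h
  refine this.continuousAt (Ioo_mem_nhds ?_ ?_)
  · linarith [neg_abs_le x]
  · linarith [le_abs_self x]

lemma aliasedDen_periodic_s11 (s α : ℝ) : Function.Periodic (aliasedDen s α) α := by
  intro x
  unfold aliasedDen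
  rw [← (Equiv.addRight (1 : ℤ)).tsum_eq]
  congr 1
  ext k
  congr 1
  simp
  ring

lemma aliasedDen_nonneg (s α x : ℝ) : 0 ≤ aliasedDen s α x :=
  tsum_nonneg fun _ => gaussDen_nonneg _ _

lemma aliasedDen_conv (s t u α x : ℝ) (hs : 0 < s) (ht : 0 < t) (hu : 0 < u) (hα : 0 < α)
    (h : u ^ 2 = s ^ 2 + t ^ 2) :
    ∫ y, aliasedDen s α (x - y) ∂(ProbabilityTheory.gaussianReal 0 (NNReal.mk (t ^ 2) (sq_nonneg t)))
      = aliasedDen u α x := by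
  have e : ∀ k : ℤ, ∫ y, gaussDen s (x - y - (k : ℝ) * α)
      ∂(ProbabilityTheory.gaussianReal 0 (NNReal.mk (t ^ 2) (sq_nonneg t))) = gaussDen u (x - k * α) := by
    intro k
    rw [← gaussDen_conv s t u _ hs ht hu h]
    congr 1
    ext y
    congr 1
    ring
  unfold aliasedDen
  rw [← integral_tsum_of_summable_integral_norm]
  · exact tsum_congr e
  · intro k
    refine Integrable.of_bound (C := (Real.sqrt (2 * Real.pi * s ^ 2))⁻¹)
      (((gaussDen_cont s).comp (by fun_prop)).aestronglyMeasurable) ?_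
    refine ae_of_all _ fun y => ?_
    rw [Real.norm_of_nonneg (gaussDen_nonneg _ _)]
    exact gaussDen_le _ _
  · simp_rw [Real.norm_of_nonneg (gaussDen_nonneg _ _), e]
    exact gaussDen_summable u α x hu hα

/-- monotonicity of the aliased-noise differential entropy in the noise level:
`h(α,σ₁) ≤ h(α,σ₂)` for `0 < σ₁ ≤ σ₂`; in particular `ε₁ = h(α,σ_e) − h(α,σ_b) ≥ 0`
whenever `σ_b ≤ σ_e`. -/
theorem aliasedEnt_mono_in_sigma (α σ₁ σ₂ : ℝ) (hα : 0 < α) (hσ₁ : 0 < σ₁)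
    (h12 : σ₁ ≤ σ₂) : aliasedEnt α σ₁ ≤ aliasedEnt α σ₂ := by
  rcases h12.eq_or_lt with rfl | hlt
  · exact le_rfl
  have hσ₂ : 0 < σ₂ := hσ₁.trans hlt
  set t := √(σ₂ ^ 2 - σ₁ ^ 2) with htdef
  have hpos : 0 < σ₂ ^ 2 - σ₁ ^ 2 := by nlinarith
  have ht : 0 < t := Real.sqrt_pos.2 hpos
  have h : σ₂ ^ 2 = σ₁ ^ 2 + t ^ 2 := by rw [htdef, Real.sq_sqrt hpos.le]; ring
  set μ := ProbabilityTheory.gaussianReal 0 (NNReal.mk (t ^ 2) (sq_nonneg t)) with hμ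
  set φ : ℝ → ℝ := fun x => x * Real.log x with hφ
  set F : ℝ → ℝ := fun x => φ (aliasedDen σ₁ α x) with hF
  have hc1 := aliasedDen_cont σ₁ α hσ₁ hα
  have hc2 := aliasedDen_cont σ₂ α hσ₂ hα
  have hp1 := aliasedDen_periodic_s11 σ₁ α
  have hFc : Continuous F := Real.continuous_mul_log.comp hc1
  have hFp : Function.Periodic F α := fun x => by simp only [hF, hp1 x]
  obtain ⟨C, hC⟩ := (hFp.isBounded_of_continuous hα.ne' hFc).exists_norm_le
  obtain ⟨D, hD⟩ := (hp1.isBounded_of_continuous hα.ne' hc1).exists_norm_le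
  have hC' : ∀ x, ‖F x‖ ≤ C := fun x => hC _ ⟨x, rfl⟩
  have hD' : ∀ x, ‖aliasedDen σ₁ α x‖ ≤ D := fun x => hD _ ⟨x, rfl⟩
  have jensen : ∀ x, φ (aliasedDen σ₂ α x) ≤ ∫ y, F (x - y) ∂μ := by
    intro x
    rw [← aliasedDen_conv σ₁ t σ₂ α x hσ₁ ht hσ₂ hα h]
    refine Real.convexOn_mul_log.map_integral_le (f := fun y => aliasedDen σ₁ α (x - y))
      Real.continuous_mul_log.continuousOn isClosed_Ici
      (ae_of_all _ fun y => aliasedDen_nonneg _ _ _) ?_ ?_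
    · exact Integrable.of_bound (C := D)
        ((hc1.comp (by fun_prop)).aestronglyMeasurable) (ae_of_all _ fun y => hD' _)
    · exact Integrable.of_bound (C := C)
        ((hFc.comp (by fun_prop : Continuous fun y => x - y)).aestronglyMeasurable)
        (ae_of_all _ fun y => hC' _)
  have hint : Integrable (Function.uncurry fun x y => F (x - y))
      ((volume.restrict (Set.Ico 0 α)).prod μ) :=
    Integrable.of_bound (C := C)
      ((hFc.comp (by fun_prop : Continuous fun p : ℝ × ℝ => p.1 - p.2)).aestronglyMeasurable)
      (ae_of_all _ fun y => hC' _)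
  unfold aliasedEnt
  rw [neg_le_neg_iff]
  calc ∫ x in Set.Ico (0 : ℝ) α, φ (aliasedDen σ₂ α x)
      ≤ ∫ x in Set.Ico (0 : ℝ) α, ∫ y, F (x - y) ∂μ := by
        refine integral_mono ?_ hint.integral_prod_left jensen
        exact ((Real.continuous_mul_log.comp hc2).integrableOn_Icc).mono_set
          Set.Ico_subset_Icc_self
    _ = ∫ y, (∫ x in Set.Ico (0 : ℝ) α, F (x - y)) ∂μ := integral_integral_swap hint
    _ = ∫ y, (∫ x in Set.Ico (0 : ℝ) α, F x) ∂μ := by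
        congr 1
        ext y
        rw [integral_Ico_eq_integral_Ioc, integral_Ico_eq_integral_Ioc,
          ← intervalIntegral.integral_of_le hα.le, ← intervalIntegral.integral_of_le hα.le,
          intervalIntegral.integral_comp_sub_right]
        have := hFp.intervalIntegral_add_eq (0 - y) 0
        rw [zero_add] at this
        rw [← this]
        congr 1
        ring
    _ = ∫ x in Set.Ico (0 : ℝ) α, F x := by simp
end

section
/- Condition (i) of the main theorem is achievable by scaling: for every fixed σ > 0, the entropy gap to the uniform distribution vanishes as the lattice becomes fine, i.e., lim_{α→0⁺} ( log α − h(α,σ) ) = 0; equivalently, h(αℤ, σ²) → log V(αℤ) as α → 0. -/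
open MeasureTheory Real Filter

noncomputable def fterm (a y : ℝ) (n : ℤ) : ℂ :=
  Complex.exp (-Real.pi * (a : ℂ) * (n : ℂ) ^ 2 + 2 * Real.pi * (Complex.I * (y : ℂ)) * n)

lemma norm_fterm (a y : ℝ) (n : ℤ) : ‖fterm a y n‖ = Real.exp (-Real.pi * a * (n : ℝ) ^ 2) := by
  rw [fterm, Complex.norm_exp]
  congr 1
  have : (-(Real.pi : ℂ) * (a : ℂ) * (n : ℂ) ^ 2 + 2 * Real.pi * (Complex.I * (y : ℂ)) * n)
      = ((-Real.pi * a * (n : ℝ) ^ 2 : ℝ) : ℂ) + ((2 * Real.pi * y * n : ℝ) : ℂ) * Complex.I := by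
    push_cast; ring
  rw [this, Complex.add_re, Complex.ofReal_re, Complex.re_ofReal_mul, Complex.I_re]
  ring

lemma norm_fterm_le (a y : ℝ) (ha : 0 < a) (n : ℤ) (hn : n ≠ 0) :
    ‖fterm a y n‖ ≤ (Real.pi * a)⁻¹ * (1 / (n : ℝ) ^ 2) := by
  rw [norm_fterm]
  have hn' : (n : ℝ) ≠ 0 := by exact_mod_cast hn
  have hp : 0 < Real.pi * a * (n : ℝ) ^ 2 := by positivity
  have h1 := Real.add_one_le_exp (Real.pi * a * (n : ℝ) ^ 2)
  rw [show -Real.pi * a * (n : ℝ) ^ 2 = -(Real.pi * a * (n : ℝ) ^ 2) by ring, Real.exp_neg,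
    one_div, ← mul_inv]
  exact inv_anti₀ hp (by linarith)

lemma sum_sq_summable : Summable (fun n : ℤ => 1 / (n : ℝ) ^ 2) :=
  Real.summable_one_div_int_pow.2 (by norm_num)

lemma fterm_bound (a y : ℝ) (ha : 0 < a) (n : ℤ) :
    ‖fterm a y n‖ ≤ (if n = 0 then 1 else 0) + (Real.pi * a)⁻¹ * (1 / (n : ℝ) ^ 2) := by
  by_cases hn : n = 0
  · subst hn; rw [norm_fterm]; simp
  · simpa [hn] using norm_fterm_le a y ha n hn

lemma fbound_summable (a : ℝ) : Summable (fun n : ℤ =>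
    (if n = 0 then (1 : ℝ) else 0) + (Real.pi * a)⁻¹ * (1 / (n : ℝ) ^ 2)) :=
  (hasSum_ite_eq (0 : ℤ) (1 : ℝ)).summable.add (sum_sq_summable.mul_left _)

lemma fterm_summable (a y : ℝ) (ha : 0 < a) : Summable (fterm a y) :=
  Summable.of_norm_bounded (fbound_summable a) (fterm_bound a y ha)

lemma ftsum_sub_one (a y : ℝ) (ha : 0 < a) :
    ‖(∑' n : ℤ, fterm a y n) - 1‖ ≤ (Real.pi * a)⁻¹ * ∑' n : ℤ, 1 / (n : ℝ) ^ 2 := by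
  have h1 : (1 : ℂ) = ∑' n : ℤ, if n = 0 then (1 : ℂ) else 0 := (tsum_ite_eq (0 : ℤ) (fun _ => (1 : ℂ))).symm
  rw [h1, ← (fterm_summable a y ha).tsum_sub (hasSum_ite_eq (0 : ℤ) (1 : ℂ)).summable]
  refine tsum_of_norm_bounded (sum_sq_summable.hasSum.mul_left _) fun n => ?_
  by_cases hn : n = 0
  · subst hn; simp [fterm]
  · simpa [hn] using norm_fterm_le a y ha n hn

lemma ftsum_continuous (a : ℝ) (ha : 0 < a) : Continuous fun y : ℝ => ∑' n : ℤ, fterm a y n := by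
  refine continuous_tsum (fun n => ?_) (fbound_summable a) (fun n y => fterm_bound a y ha n)
  unfold fterm
  fun_prop

lemma aliased_eq (σ α x : ℝ) (hσ : 0 < σ) (hα : 0 < α) :
    ((α * aliasedDen σ α x : ℝ) : ℂ) =
      ∑' n : ℤ, fterm (2 * Real.pi * σ ^ 2 / α ^ 2) (x / α) n := by
  set a := 2 * Real.pi * σ ^ 2 / α ^ 2 with ha_def
  have ha : 0 < a := by positivity
  have hα' : (α : ℂ) ≠ 0 := by exact_mod_cast hα.ne'
  have hσ' : (σ : ℂ) ≠ 0 := by exact_mod_cast hσ.ne'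
  have hpi : (Real.pi : ℂ) ≠ 0 := by exact_mod_cast Real.pi_ne_zero
  have h := Complex.tsum_exp_neg_quadratic (a := (a : ℂ)) (by simpa using ha)
    (Complex.I * ((x / α : ℝ) : ℂ))
  unfold fterm
  rw [h]
  have hs : (a : ℂ) ^ (1 / 2 : ℂ) = ((Real.sqrt (2 * Real.pi * σ ^ 2) / α : ℝ) : ℂ) := by
    rw [show (1 / 2 : ℂ) = ((1 / 2 : ℝ) : ℂ) by push_cast; rfl, ← Complex.ofReal_cpow ha.le,
      ← Real.sqrt_eq_rpow, ha_def, Real.sqrt_div (by positivity), Real.sqrt_sq hα.le]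
  rw [hs]
  unfold aliasedDen gaussDen
  rw [tsum_mul_left]
  push_cast
  rw [one_div, inv_div, ← mul_assoc, ← div_eq_mul_inv]
  congr 1
  refine tsum_congr fun n => ?_
  congr 1
  rw [ha_def]
  push_cast
  rw [show (n : ℂ) + Complex.I * (Complex.I * (x / α)) = n - x / α by
    rw [← mul_assoc, Complex.I_mul_I]; ring]
  field_simp
  ring

lemma aliased_continuous (σ α : ℝ) (hσ : 0 < σ) (hα : 0 < α) :
    Continuous (fun x => aliasedDen σ α x) := by
  have h : (fun x => aliasedDen σ α x) = fun x => α⁻¹ *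
      (∑' n : ℤ, fterm (2 * Real.pi * σ ^ 2 / α ^ 2) (x / α) n).re := by
    funext x
    rw [← aliased_eq σ α x hσ hα, Complex.ofReal_re]
    field_simp
  rw [h]
  have hc := ftsum_continuous (2 * Real.pi * σ ^ 2 / α ^ 2) (by positivity)
  exact continuous_const.mul (Complex.continuous_re.comp
    (hc.comp (continuous_id.div_const α)))

lemma aliased_near (σ : ℝ) (hσ : 0 < σ) : ∃ K : ℝ, 0 ≤ K ∧ ∀ α x : ℝ, 0 < α →
    |α * aliasedDen σ α x - 1| ≤ K * α ^ 2 := by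
  refine ⟨(Real.pi * (2 * Real.pi * σ ^ 2))⁻¹ * ∑' n : ℤ, 1 / (n : ℝ) ^ 2,
    mul_nonneg (by positivity) (tsum_nonneg fun n => by positivity), fun α x hα => ?_⟩
  have h := ftsum_sub_one (2 * Real.pi * σ ^ 2 / α ^ 2) (x / α) (by positivity)
  rw [← aliased_eq σ α x hσ hα] at h
  rw [show ((α * aliasedDen σ α x : ℝ) : ℂ) - 1 = ((α * aliasedDen σ α x - 1 : ℝ) : ℂ) by
    push_cast; rfl, Complex.norm_real, Real.norm_eq_abs] at h
  refine h.trans (le_of_eq ?_)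
  field_simp

lemma mul_log_bound (u d : ℝ) (hd : d ≤ 1 / 2) (hu : |u - 1| ≤ d) : |u * Real.log u| ≤ 2 * d := by
  obtain ⟨h1, h2⟩ := abs_le.1 hu
  have hu0 : 0 < u := by linarith
  have a1 := Real.log_le_sub_one_of_pos hu0
  have a2 := Real.one_sub_inv_le_log_of_pos hu0
  have b1 := mul_le_mul_of_nonneg_left a1 hu0.le
  have b2 := mul_le_mul_of_nonneg_left a2 hu0.le
  rw [mul_sub, mul_inv_cancel₀ hu0.ne'] at b2
  rw [abs_le]
  constructor
  · linarith
  · nlinarith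

lemma gap_bound (σ K α : ℝ) (hσ : 0 < σ) (hα : 0 < α) (hK : K * α ^ 2 ≤ 1 / 2)
    (h : ∀ x : ℝ, |α * aliasedDen σ α x - 1| ≤ K * α ^ 2) :
    |Real.log α - aliasedEnt α σ| ≤ K * α ^ 2 * |Real.log α| + 2 * (K * α ^ 2) := by
  have hint : IntegrableOn (fun x => aliasedDen σ α x * Real.log (aliasedDen σ α x))
      (Set.Ico 0 α) :=
    ((Real.continuous_mul_log.comp (aliased_continuous σ α hσ hα)).continuousOn.integrableOn_Icc
      (a := 0) (b := α)).mono_set Set.Ico_subset_Icc_self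
  have hvol : (volume : Measure ℝ).real (Set.Ico 0 α) = α := by
    simp [hα.le]
  have hfin : (volume : Measure ℝ) (Set.Ico 0 α) < ⊤ := by simp
  have hconst : Real.log α = ∫ x in Set.Ico (0 : ℝ) α, Real.log α / α := by
    rw [setIntegral_const, hvol, smul_eq_mul]; field_simp
  have heq : Real.log α - aliasedEnt α σ = ∫ x in Set.Ico (0 : ℝ) α,
      (Real.log α / α + aliasedDen σ α x * Real.log (aliasedDen σ α x)) := by
    have hc : Integrable (fun _ : ℝ => Real.log α / α) (volume.restrict (Set.Ico 0 α)) :=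
      integrableOn_const hfin.ne
    rw [integral_add hc hint, ← hconst, aliasedEnt]
    ring
  rw [heq, ← Real.norm_eq_abs]
  have := norm_setIntegral_le_of_norm_le_const (μ := volume) (s := Set.Ico 0 α)
    (f := fun x => Real.log α / α + aliasedDen σ α x * Real.log (aliasedDen σ α x))
    (C := (K * α ^ 2 * |Real.log α| + 2 * (K * α ^ 2)) / α) hfin (fun x _ => ?_)
  · rw [hvol, div_mul_cancel₀ _ hα.ne'] at this
    exact this
  · have hx := h x
    set f := aliasedDen σ α x
    have hf : 0 < f := by
      have := (abs_le.1 hx).1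
      by_contra hcon
      have : α * f ≤ 0 := mul_nonpos_of_nonneg_of_nonpos hα.le (not_lt.1 hcon)
      linarith
    have hm := mul_log_bound _ _ hK hx
    have e : Real.log α / α + f * Real.log f =
        (-((α * f - 1) * Real.log α) + α * f * Real.log (α * f)) / α := by
      rw [Real.log_mul hα.ne' hf.ne']; field_simp; ring
    rw [e, Real.norm_eq_abs, abs_div, abs_of_pos hα]
    gcongr
    refine (abs_add_le _ _).trans (add_le_add ?_ hm)
    rw [abs_neg, abs_mul]
    gcongr

/-- condition (i) of the main theorem is achievable by scaling: for fixed
`σ > 0`, the entropy gap to the uniform distribution vanishes as the lattice becomes fine: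
`log α − h(α,σ) → 0` as `α → 0⁺`, i.e. `h(αℤ, σ²) → log V(αℤ)`. -/
theorem entropy_gap_to_uniform_tendsto_zero (σ : ℝ) (hσ : 0 < σ) :
    Filter.Tendsto (fun α : ℝ => Real.log α - aliasedEnt α σ)
      (nhdsWithin 0 (Set.Ioi 0)) (nhds 0) := by
  obtain ⟨K, hK0, hK⟩ := aliased_near σ hσ
  have hc : Continuous fun α : ℝ => K * |α| * |α * Real.log α| + 2 * (K * α ^ 2) := by
    have := Real.continuous_mul_log
    fun_prop
  have ht : Tendsto (fun α : ℝ => K * |α| * |α * Real.log α| + 2 * (K * α ^ 2))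
      (nhdsWithin 0 (Set.Ioi 0)) (nhds 0) := by
    have := hc.tendsto 0
    simp only [abs_zero, mul_zero, zero_mul, add_zero, ne_eq, OfNat.ofNat_ne_zero,
      not_false_eq_true, zero_pow] at this
    exact this.mono_left nhdsWithin_le_nhds
  have hs : ∀ᶠ α : ℝ in nhdsWithin 0 (Set.Ioi 0), K * α ^ 2 < 1 / 2 := by
    have hc2 : Continuous fun α : ℝ => K * α ^ 2 := by fun_prop
    have := hc2.tendsto 0
    simp at this
    exact (this.mono_left nhdsWithin_le_nhds).eventually_lt_const (by norm_num)
  refine squeeze_zero_norm' ?_ ht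
  filter_upwards [hs, self_mem_nhdsWithin] with α h1 h2
  have h2 : 0 < α := h2
  have := gap_bound σ K α hσ h2 h1.le (fun x => hK α x h2)
  rw [Real.norm_eq_abs]
  refine this.trans (le_of_eq ?_)
  rw [abs_mul, abs_of_pos h2]
  ring
end

section
/- Upper bound on the total secrecy rate (converse part of the rate computation in Theorem 1): for all σ_b, σ_e with 0 < σ_b ≤ σ_e, every α > 0 and every integer r ≥ 2, the sum over the levels of the binary partition chain αℤ/2αℤ/⋯/2^{r−1}αℤ of the per-level capacity differences satisfies Σ_{i=1}^{r−1} ( C(2^{i−1}α, σ_b) − C(2^{i−1}α, σ_e) ) ≤ (1/2)·log( σ_e² / σ_b² ). -/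
open MeasureTheory Real Filter

/-- The capacity `C(α,σ) = h(α,σ) − h(2α,σ) + log 2` of the binary partition channel
`αℤ/2αℤ` with Gaussian noise of variance `σ²`. -/
noncomputable def partCap (α σ : ℝ) : ℝ :=
  aliasedEnt α σ - aliasedEnt (2 * α) σ + Real.log 2


open ProbabilityTheory
open scoped ENNReal NNReal

noncomputable def sv (σ : ℝ) : ℝ≥0 := ⟨σ ^ 2, sq_nonneg σ⟩
noncomputable def gm (σ : ℝ) : Measure ℝ := gaussianReal 0 (sv σ)
noncomputable def gE (σ x : ℝ) : ℝ≥0∞ := ENNReal.ofReal (gaussDen σ x)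
noncomputable def fE (σ α x : ℝ) : ℝ≥0∞ := ∑' k : ℤ, gE σ (x - (k : ℝ) * α)

instance gm_prob (σ : ℝ) : IsProbabilityMeasure (gm σ) := by unfold gm; infer_instance

lemma sv_ne {σ : ℝ} (h : 0 < σ) : sv σ ≠ 0 := by
  intro h2
  have : ((sv σ : ℝ≥0) : ℝ) = 0 := by rw [h2]; rfl
  have h3 : σ ^ 2 = 0 := this
  exact h.ne' (by simpa using h3)

lemma gaussDen_eq (σ x : ℝ) : gaussDen σ x = gaussianPDFReal 0 (sv σ) x := by
  have : ((sv σ : ℝ≥0) : ℝ) = σ ^ 2 := rfl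
  simp [gaussDen, gaussianPDFReal, this]

lemma gaussDen_pos {σ : ℝ} (h : 0 < σ) (x : ℝ) : 0 < gaussDen σ x := by
  rw [gaussDen_eq]; exact gaussianPDFReal_pos _ _ _ (sv_ne h)

@[fun_prop]
lemma gaussDen_meas (σ : ℝ) : Measurable (gaussDen σ) := by
  unfold gaussDen; fun_prop

@[fun_prop]
lemma gE_meas (σ : ℝ) : Measurable (gE σ) := by
  unfold gE; fun_prop

@[fun_prop]
lemma fE_meas (σ α : ℝ) : Measurable (fE σ α) := by
  unfold fE
  exact Measurable.tsum fun k => by fun_prop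

lemma gm_eq {σ : ℝ} (h : 0 < σ) : gm σ = volume.withDensity (gE σ) := by
  unfold gm
  rw [gaussianReal_of_var_ne_zero _ (sv_ne h)]
  congr 1
  ext x
  rw [gaussianPDF, gE, gaussDen_eq]

lemma lint_gm {σ : ℝ} (h : 0 < σ) {q : ℝ → ℝ≥0∞} (hq : Measurable q) :
    ∫⁻ x, q x ∂(gm σ) = ∫⁻ x, gE σ x * q x := by
  rw [gm_eq h, lintegral_withDensity_eq_lintegral_mul _ (gE_meas σ) hq]
  rfl

lemma int_gm {σ : ℝ} (h : 0 < σ) (q : ℝ → ℝ) :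
    ∫ x, q x ∂(gm σ) = ∫ x, gaussDen σ x * q x := by
  unfold gm
  rw [integral_gaussianReal_eq_integral_smul (sv_ne h)]
  simp [gaussDen_eq]

lemma ico_pre (α : ℝ) (k : ℤ) : (fun x : ℝ => x + (k:ℝ) * α) ⁻¹' (Set.Ico (k • α) ((k+1) • α)) = Set.Ico 0 α := by
  ext x
  simp only [Set.mem_preimage, Set.mem_Ico, zsmul_eq_mul]
  push_cast
  constructor <;> rintro ⟨h1, h2⟩ <;> constructor <;> linarith

lemma lint_fold {α : ℝ} (hα : 0 < α) {q : ℝ → ℝ≥0∞} (hq : Measurable q) :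
    ∫⁻ x, q x = ∫⁻ x in Set.Ico 0 α, ∑' k : ℤ, q (x - k * α) := by
  rw [lintegral_tsum (fun k => by fun_prop), ← setLIntegral_univ, ← iUnion_Ico_zsmul hα,
    lintegral_iUnion (fun _ => measurableSet_Ico) (Set.pairwise_disjoint_Ico_zsmul α),
    ← (Equiv.neg ℤ).tsum_eq]
  refine tsum_congr fun k => ?_
  rw [← (measurePreserving_add_right volume (((Equiv.neg ℤ k : ℤ):ℝ) * α)).setLIntegral_comp_preimage
    measurableSet_Ico hq, ico_pre]
  simp [sub_eq_add_neg]

lemma int_fold {α : ℝ} (hα : 0 < α) {q : ℝ → ℝ} (hq : Measurable q) (hi : Integrable q) :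
    ∫ x, q x = ∫ x in Set.Ico 0 α, ∑' k : ℤ, q (x - k * α) := by
  rw [integral_tsum (fun k : ℤ => (by fun_prop : Measurable fun x : ℝ => q (x - (k:ℝ) * α)).aestronglyMeasurable)]
  · rw [← setIntegral_univ, ← iUnion_Ico_zsmul hα,
      integral_iUnion (fun _ => measurableSet_Ico) (Set.pairwise_disjoint_Ico_zsmul α) hi.integrableOn,
      ← (Equiv.neg ℤ).tsum_eq]
    refine tsum_congr fun k => ?_
    rw [← (measurePreserving_add_right volume (((Equiv.neg ℤ k : ℤ):ℝ) * α)).setIntegral_preimage_emb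
      (measurableEmbedding_addRight _), ico_pre]
    simp [sub_eq_add_neg]
  · rw [← lintegral_tsum (fun k => by fun_prop), ← lint_fold hα (q := fun x => ‖q x‖ₑ) (by fun_prop)]
    exact hi.2.ne

/-- pointwise quadratic bound of a shifted Gaussian -/
lemma gaussDen_shift_le {σ : ℝ} (h : 0 < σ) (α x : ℝ) (k : ℤ) :
    gaussDen σ (x - k * α) ≤ ((Real.sqrt (2 * Real.pi * σ ^ 2))⁻¹ * rexp (x ^ 2 / (2 * σ ^ 2))) *
      rexp (-(α ^ 2 / (4 * σ ^ 2)) * (k:ℝ) ^ 2) := by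
  unfold gaussDen
  rw [mul_assoc _ (rexp _) (rexp _), ← Real.exp_add]
  gcongr
  rw [← sub_nonneg]
  have : x ^ 2 / (2 * σ ^ 2) + -(α ^ 2 / (4 * σ ^ 2)) * (k:ℝ) ^ 2 - -(x - k * α) ^ 2 / (2 * σ ^ 2)
      = (2 * x - k * α) ^ 2 / (4 * σ ^ 2) := by
    field_simp
    ring
  rw [this]
  positivity

lemma summable_gz {c : ℝ} (hc : 0 < c) : Summable fun k : ℤ => rexp (-c * (k:ℝ) ^ 2) := by
  have h1 : Summable fun n : ℕ => rexp (-c * (n:ℝ) ^ 2) := by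
    have h2 : Summable fun n : ℕ => (rexp (-c)) ^ n :=
      summable_geometric_of_lt_one (Real.exp_pos _).le (by simpa using hc)
    refine Summable.of_nonneg_of_le (fun _ => (Real.exp_pos _).le) (fun n => ?_) h2
    rw [← Real.exp_nat_mul]
    apply Real.exp_le_exp.mpr
    have : (n:ℝ) ≤ (n:ℝ)^2 := by exact_mod_cast Nat.le_self_pow (by norm_num) n
    nlinarith
  apply Summable.of_nat_of_neg
  · simpa using h1
  · simpa using h1

lemma summable_alias {σ α : ℝ} (h : 0 < σ) (hα : 0 < α) (x : ℝ) :
    Summable fun k : ℤ => gaussDen σ (x - (k:ℝ) * α) :=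
  Summable.of_nonneg_of_le (fun _ => (gaussDen_pos h _).le) (fun k => gaussDen_shift_le h α x k)
    ((summable_gz (by positivity)).mul_left _)

lemma fE_eq {σ α : ℝ} (h : 0 < σ) (hα : 0 < α) (x : ℝ) :
    fE σ α x = ENNReal.ofReal (aliasedDen σ α x) := by
  unfold fE aliasedDen gE
  rw [ENNReal.ofReal_tsum_of_nonneg (fun _ => (gaussDen_pos h _).le) (summable_alias h hα x)]

lemma gauss_le_alias {σ α : ℝ} (h : 0 < σ) (hα : 0 < α) (x : ℝ) :
    gaussDen σ x ≤ aliasedDen σ α x := by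
  have := (summable_alias h hα x).le_tsum 0 (fun _ _ => (gaussDen_pos h _).le)
  simpa [aliasedDen] using this

lemma alias_pos {σ α : ℝ} (h : 0 < σ) (hα : 0 < α) (x : ℝ) : 0 < aliasedDen σ α x :=
  (gaussDen_pos h x).trans_le (gauss_le_alias h hα x)

lemma alias_meas {σ α : ℝ} (h : 0 < σ) (hα : 0 < α) : Measurable (aliasedDen σ α) := by
  have : aliasedDen σ α = fun x => (fE σ α x).toReal := by
    ext x
    rw [fE_eq h hα, ENNReal.toReal_ofReal (alias_pos h hα x).le]
  rw [this]
  fun_prop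

lemma alias_per (σ α x : ℝ) (k : ℤ) : aliasedDen σ α (x - k * α) = aliasedDen σ α x := by
  unfold aliasedDen
  rw [← (Equiv.addLeft k).tsum_eq (fun j : ℤ => gaussDen σ (x - (j:ℝ) * α))]
  refine tsum_congr fun j => ?_
  congr 1
  simp
  ring

lemma log_gauss {σ : ℝ} (h : 0 < σ) (x : ℝ) :
    Real.log (gaussDen σ x) = Real.log ((Real.sqrt (2 * Real.pi * σ ^ 2))⁻¹) - x ^ 2 / (2 * σ ^ 2) := by
  unfold gaussDen
  rw [Real.log_mul (by positivity) (by positivity), Real.log_exp]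
  ring

lemma log_alias_bound {σ α : ℝ} (h : 0 < σ) (hα : 0 < α) :
    ∃ A B : ℝ, ∀ x, |Real.log (aliasedDen σ α x)| ≤ A + B * x ^ 2 := by
  set K := Real.log ((Real.sqrt (2 * Real.pi * σ ^ 2))⁻¹)
  set S := ∑' k : ℤ, rexp (-(α ^ 2 / (4 * σ ^ 2)) * (k:ℝ) ^ 2)
  have hS : 0 < S := (summable_gz (by positivity)).tsum_pos (fun _ => (Real.exp_pos _).le) 0 (Real.exp_pos _)
  refine ⟨|K| + |Real.log S|, 1 / (2 * σ ^ 2), fun x => ?_⟩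
  have hl := Real.log_le_log (gaussDen_pos h x) (gauss_le_alias h hα x)
  rw [log_gauss h] at hl
  have hu : aliasedDen σ α x ≤
      ((Real.sqrt (2 * Real.pi * σ ^ 2))⁻¹ * rexp (x ^ 2 / (2 * σ ^ 2))) * S := by
    unfold aliasedDen
    simp only [S]
    rw [← tsum_mul_left]
    exact (summable_alias h hα x).tsum_le_tsum (fun k => gaussDen_shift_le h α x k)
      ((summable_gz (by positivity)).mul_left _)
  have hu2 := Real.log_le_log (alias_pos h hα x) hu
  rw [Real.log_mul (by positivity) hS.ne', Real.log_mul (by positivity) (by positivity), Real.log_exp] at hu2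
  have e : 1 / (2 * σ ^ 2) * x ^ 2 = x ^ 2 / (2 * σ ^ 2) := by ring
  rw [abs_le, e]
  constructor
  · linarith [neg_abs_le K, abs_nonneg (Real.log S)]
  · linarith [le_abs_self K, le_abs_self (Real.log S)]

lemma sq_integrable (s : ℝ) : Integrable (fun x => x ^ 2) (gm s) := by
  have := (memLp_id_gaussianReal (μ := 0) (v := sv s) 2)
  exact this.integrable_sq

lemma log_alias_integrable {σ α : ℝ} (s : ℝ) (h : 0 < σ) (hα : 0 < α) :
    Integrable (fun x => Real.log (aliasedDen σ α x)) (gm s) := by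
  obtain ⟨A, B, hAB⟩ := log_alias_bound h hα
  refine Integrable.mono' (g := fun x => A + B * x ^ 2) ?_ ?_ (ae_of_all _ hAB)
  · exact (integrable_const A).add ((sq_integrable s).const_mul B)
  · exact (Real.measurable_log.comp (alias_meas h hα)).aestronglyMeasurable

lemma ent_eq {σ α : ℝ} (h : 0 < σ) (hα : 0 < α) :
    ∫ x, Real.log (aliasedDen σ α x) ∂(gm σ) = - aliasedEnt α σ := by
  have hm := Real.measurable_log.comp (alias_meas h hα)
  have hi := log_alias_integrable σ h hα
  rw [gm_eq h, integrable_withDensity_iff (gE_meas σ) (by simp [gE])] at hi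
  rw [int_gm h, int_fold (q := fun x => gaussDen σ x * Real.log (aliasedDen σ α x)) hα ((gaussDen_meas σ).mul hm), aliasedEnt, neg_neg]
  · congr 1
    ext x
    simp only [alias_per]
    rw [tsum_mul_right]
    rfl
  · refine hi.congr (ae_of_all _ fun x => ?_)
    simp [gE, ENNReal.toReal_ofReal (gaussDen_pos h x).le, mul_comm]

lemma gm_add {b t e : ℝ} (hs : b ^ 2 + t ^ 2 = e ^ 2) :
    ((gm b).prod (gm t)).map (fun p : ℝ × ℝ => p.1 + p.2) = gm e := by
  have := gaussianReal_conv_gaussianReal (m₁ := 0) (m₂ := 0) (v₁ := sv b) (v₂ := sv t)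
  have h2 : sv b + sv t = sv e := by
    apply NNReal.eq
    exact hs
  rw [h2, add_zero] at this
  exact this

lemma gibbs {Ω : Type*} [MeasurableSpace Ω] (P : Measure Ω) [IsProbabilityMeasure P] (D : Ω → ℝ)
    (hD : Integrable D P) (h : ∫⁻ p, ENNReal.ofReal (rexp (-D p)) ∂P ≤ 1) : 0 ≤ ∫ p, D p ∂P := by
  have hm : AEStronglyMeasurable (fun p => rexp (-D p)) P :=
    Real.continuous_exp.comp_aestronglyMeasurable hD.1.neg
  have hi : Integrable (fun p => rexp (-D p)) P := by
    refine ⟨hm, ?_⟩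
    rw [hasFiniteIntegral_iff_ofReal (ae_of_all _ fun _ => (Real.exp_pos _).le)]
    exact h.trans_lt ENNReal.one_lt_top
  have hle : ∫ p, rexp (-D p) ∂P ≤ 1 := by
    rw [integral_eq_lintegral_of_nonneg_ae (ae_of_all _ fun _ => (Real.exp_pos _).le) hm]
    exact ENNReal.toReal_le_of_le_ofReal zero_le_one (by simpa using h)
  have h3 : ∫ p, (1 - rexp (-D p)) ∂P ≤ ∫ p, D p ∂P := by
    refine integral_mono ((integrable_const 1).sub hi) hD fun p => ?_
    have := Real.add_one_le_exp (-D p)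
    simp only
    linarith
  rw [integral_sub (integrable_const 1) hi] at h3
  simp at h3
  linarith

lemma sq_int {s : ℝ} : ∫ x, x ^ 2 ∂(gm s) = s ^ 2 := by
  have h1 := variance_fun_id_gaussianReal (μ := 0) (v := sv s)
  rw [variance_of_integral_eq_zero (by fun_prop) (by simp)] at h1
  exact h1

lemma int_fst {b t : ℝ} {q : ℝ → ℝ} (hq : Integrable q (gm b)) :
    Integrable (fun p : ℝ × ℝ => q p.1) ((gm b).prod (gm t)) ∧
    ∫ p, q p.1 ∂((gm b).prod (gm t)) = ∫ x, q x ∂(gm b) := by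
  refine ⟨hq.comp_fst _, ?_⟩
  rw [integral_fun_fst]
  simp

lemma int_add {b t e : ℝ} (hs : b ^ 2 + t ^ 2 = e ^ 2) {q : ℝ → ℝ} (hq : Integrable q (gm e)) :
    Integrable (fun p : ℝ × ℝ => q (p.1 + p.2)) ((gm b).prod (gm t)) ∧
    ∫ p, q (p.1 + p.2) ∂((gm b).prod (gm t)) = ∫ x, q x ∂(gm e) := by
  have hm : AEMeasurable (fun p : ℝ × ℝ => p.1 + p.2) ((gm b).prod (gm t)) := by fun_prop
  rw [← gm_add hs] at hq ⊢
  exact ⟨hq.comp_aemeasurable hm, (integral_map hm hq.1).symm⟩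

lemma ent_mono {b t e α : ℝ} (hb : 0 < b) (he : 0 < e) (hα : 0 < α) (hs : b ^ 2 + t ^ 2 = e ^ 2)
    : aliasedEnt α b ≤ aliasedEnt α e := by
  obtain ⟨i1, e1⟩ := int_fst (t := t) (log_alias_integrable b hb hα)
  obtain ⟨i2, e2⟩ := int_add hs (log_alias_integrable e he hα)
  have key := gibbs _ _ (i1.sub i2) ?_
  · simp only [Pi.sub_apply] at key
    rw [integral_sub i1 i2, e1, e2, ent_eq hb hα, ent_eq he hα] at key
    linarith
  have hpt : ∀ p : ℝ × ℝ, ENNReal.ofReal (rexp (-((fun p : ℝ × ℝ => Real.log (aliasedDen b α p.1)) -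
      (fun p : ℝ × ℝ => Real.log (aliasedDen e α (p.1 + p.2)))) p)) =
      (fE b α p.1)⁻¹ * fE e α (p.1 + p.2) := by
    intro p
    simp only [Pi.sub_apply]
    rw [neg_sub, Real.exp_sub, Real.exp_log (alias_pos he hα _), Real.exp_log (alias_pos hb hα _),
      ENNReal.ofReal_div_of_pos (alias_pos hb hα _), fE_eq hb hα, fE_eq he hα, ENNReal.div_eq_inv_mul]
  simp only [hpt]
  rw [lintegral_prod_symm _ (by fun_prop)]
  have inner : ∀ y : ℝ, ∫⁻ x, (fE b α x)⁻¹ * fE e α (x + y) ∂(gm b) = 1 := by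
    intro y
    rw [lint_gm hb (by fun_prop), lint_fold hα (by fun_prop)]
    have : ∀ x : ℝ, ∑' k : ℤ, gE b (x - k * α) * ((fE b α (x - k * α))⁻¹ * fE e α (x - k * α + y))
        = ∑' k : ℤ, gE e (x - k * α + y) := by
      intro x
      have h1 : ∀ k : ℤ, fE b α (x - k * α) = fE b α x := fun k => by
        rw [fE_eq hb hα, alias_per, fE_eq hb hα]
      have h2 : ∀ k : ℤ, fE e α (x - k * α + y) = fE e α (x + y) := fun k => by
        rw [fE_eq he hα, fE_eq he hα, ← alias_per e α (x + y) k]; congr 2; ring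
      simp only [h1, h2]
      rw [ENNReal.tsum_mul_right]
      change fE b α x * _ = _
      rw [← mul_assoc, ENNReal.mul_inv_cancel, one_mul]
      · rw [fE]; refine tsum_congr fun k => ?_
        congr 1; ring
      · rw [fE_eq hb hα]; simpa using alias_pos hb hα x
      · rw [fE_eq hb hα]; simp
    simp only [this]
    rw [← lint_fold (q := fun x => gE e (x + y)) hα (by fun_prop),
      lintegral_add_right_eq_self (fun x => gE e x) y]
    have := lint_gm he (q := fun _ => 1) (by fun_prop)
    simpa using this.symm
  simp [inner]

lemma ent_diff {b t e α : ℝ} (hb : 0 < b) (he : 0 < e) (hα : 0 < α) (hs : b ^ 2 + t ^ 2 = e ^ 2)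
    : aliasedEnt α e - aliasedEnt α b ≤ (1 / 2 : ℝ) * Real.log (e ^ 2 / b ^ 2) := by
  have lgi : ∀ {s : ℝ}, 0 < s → Integrable (fun x => Real.log (gaussDen s x)) (gm s) ∧
      ∫ x, Real.log (gaussDen s x) ∂(gm s) = - (1/2) * Real.log (2 * π * s ^ 2) - 1 / 2 := by
    intro s h
    simp only [log_gauss h]
    have i := (sq_integrable s).div_const (2 * s ^ 2)
    refine ⟨(integrable_const _).sub i, ?_⟩
    rw [integral_sub (integrable_const _) i, integral_div, sq_int, Real.log_inv,
      Real.log_sqrt (by positivity)]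
    simp
    field_simp
  obtain ⟨g1, ge1⟩ := lgi hb
  obtain ⟨g2, ge2⟩ := lgi he
  obtain ⟨i1, e1⟩ := int_fst (t := t) (g1.sub (log_alias_integrable b hb hα))
  obtain ⟨i2, e2⟩ := int_add hs (g2.sub (log_alias_integrable e he hα))
  have key := gibbs _ _ (i1.sub i2) ?_
  · simp only [Pi.sub_apply] at key e1 e2 i1 i2
    rw [integral_sub i1 i2, e1, e2, integral_sub g1 (log_alias_integrable b hb hα),
      integral_sub g2 (log_alias_integrable e he hα), ent_eq hb hα, ent_eq he hα, ge1, ge2] at key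
    rw [Real.log_mul (x := 2 * π) (y := b ^ 2) (by positivity) (by positivity),
      Real.log_mul (x := 2 * π) (y := e ^ 2) (by positivity) (by positivity)] at key
    rw [Real.log_div (by positivity) (by positivity)]
    linarith
  set φ : ℝ → ℝ≥0∞ := fun y => gE e y * (fE e α y)⁻¹ with hφ
  have φm : Measurable φ := by fun_prop
  have hpt : ∀ p : ℝ × ℝ, ENNReal.ofReal (rexp (-((fun p : ℝ × ℝ =>
        ((fun x => Real.log (gaussDen b x)) - fun x => Real.log (aliasedDen b α x)) p.1) -
      (fun p : ℝ × ℝ => ((fun x => Real.log (gaussDen e x)) -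
        fun x => Real.log (aliasedDen e α x)) (p.1 + p.2))) p)) =
      (gE b p.1)⁻¹ * (fE b α p.1 * φ (p.1 + p.2)) := by
    intro p
    simp only [Pi.sub_apply, hφ]
    have g1 := gaussDen_pos hb p.1
    have g2 := gaussDen_pos he (p.1 + p.2)
    have f1 := alias_pos hb hα p.1
    have f2 := alias_pos he hα (p.1 + p.2)
    rw [neg_sub, Real.exp_sub, Real.exp_sub, Real.exp_sub, Real.exp_log g1, Real.exp_log g2,
      Real.exp_log f1, Real.exp_log f2, fE_eq hb hα, fE_eq he hα, gE, gE,
      ← ENNReal.ofReal_inv_of_pos g1, ← ENNReal.ofReal_inv_of_pos f2,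
      ← ENNReal.ofReal_mul (by positivity), ← ENNReal.ofReal_mul (by positivity),
      ← ENNReal.ofReal_mul (by positivity)]
    congr 1
    field_simp
  simp only [hpt]
  rw [lintegral_prod_symm _ (by fun_prop)]
  have inner : ∀ y : ℝ, ∫⁻ x, (gE b x)⁻¹ * (fE b α x * φ (x + y)) ∂(gm b)
      = ∑' k : ℤ, ∫⁻ x, φ (x + k * α + y) ∂(gm b) := by
    intro y
    rw [lint_gm hb (by fun_prop)]
    have h1 : ∀ x : ℝ, gE b x * ((gE b x)⁻¹ * (fE b α x * φ (x + y))) =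
        ∑' k : ℤ, gE b (x - k * α) * φ (x + y) := by
      intro x
      rw [← mul_assoc, ENNReal.mul_inv_cancel, one_mul, fE, ENNReal.tsum_mul_right]
      · simpa [gE] using gaussDen_pos hb x
      · simp [gE]
    simp only [h1]
    rw [lintegral_tsum (fun k => by fun_prop)]
    refine tsum_congr fun k => ?_
    rw [lint_gm hb (by fun_prop),
      ← lintegral_add_right_eq_self (fun x => gE b (x - k * α) * φ (x + y)) (k * α)]
    simp
  simp only [inner]
  rw [lintegral_tsum (fun k : ℤ => (Measurable.lintegral_prod_left' (f := fun p : ℝ × ℝ => φ (p.1 + k * α + p.2)) (by fun_prop)).aemeasurable)]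
  have h2 : ∀ k : ℤ, ∫⁻ y, ∫⁻ x, φ (x + k * α + y) ∂(gm b) ∂(gm t) = ∫⁻ z, φ (z + k * α) ∂(gm e) := by
    intro k
    rw [← gm_add hs, lintegral_map (by fun_prop) (by fun_prop), lintegral_prod_symm _ (by fun_prop)]
    simp only [add_right_comm]
  simp only [h2]
  rw [← lintegral_tsum (fun k => by fun_prop)]
  have h3 : ∀ z : ℝ, ∑' k : ℤ, φ (z + k * α) = 1 := by
    intro z
    rw [← (Equiv.neg ℤ).tsum_eq]
    have h1 : ∀ k : ℤ, φ (z + ((Equiv.neg ℤ k : ℤ) : ℝ) * α) = gE e (z - k * α) * (fE e α z)⁻¹ := fun k => by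
      have : z + ((Equiv.neg ℤ k : ℤ) : ℝ) * α = z - k * α := by simp; ring
      simp only [hφ]
      rw [this, fE_eq he hα, fE_eq he hα, alias_per]
    simp only [h1]
    rw [ENNReal.tsum_mul_right]
    change fE e α z * _ = _
    rw [ENNReal.mul_inv_cancel]
    · rw [fE_eq he hα]; simpa using alias_pos he hα z
    · rw [fE_eq he hα]; simp
  simp [h3]


lemma tele (α : ℝ) (s : ℝ) (n : ℕ) : ∑ i ∈ Finset.range n, partCap ((2:ℝ) ^ i * α) s =
    aliasedEnt α s - aliasedEnt ((2:ℝ) ^ n * α) s + n * Real.log 2 := by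
  induction n with
  | zero => simp
  | succ n ih =>
    rw [Finset.sum_range_succ, ih, partCap, ← mul_assoc, ← pow_succ']
    push_cast
    ring

/-- upper bound on the total secrecy rate (converse part of the rate
computation in Theorem 1): the sum over the levels of the binary partition chain
`αℤ/2αℤ/⋯/2^{r−1}αℤ` of the per-level capacity differences is at most
`(1/2)·log(σ_e²/σ_b²)`. -/
theorem total_secrecy_rate_upper_bound (σb σe α : ℝ) (hσb : 0 < σb) (hbe : σb ≤ σe)
    (hα : 0 < α) (r : ℕ) (hr : 2 ≤ r) :
    ∑ i ∈ Finset.range (r - 1),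
        (partCap ((2 : ℝ) ^ i * α) σb - partCap ((2 : ℝ) ^ i * α) σe) ≤
      (1 / 2 : ℝ) * Real.log (σe ^ 2 / σb ^ 2) := by

  have he : 0 < σe := hσb.trans_le hbe
  have hs : σb ^ 2 + (Real.sqrt (σe ^ 2 - σb ^ 2)) ^ 2 = σe ^ 2 := by
    rw [Real.sq_sqrt (sub_nonneg.mpr (by gcongr))]
    ring
  rw [Finset.sum_sub_distrib, tele, tele]
  have h1 := ent_mono hσb he hα hs
  have h2 := ent_diff hσb he (α := (2:ℝ) ^ (r - 1) * α) (by positivity) hs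
  linarith
end
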